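/- arXiv:2408.14981 — 2 statements merged into one kernel-verified Lean document; each statement's English description precedes it below -/
import Mathlib

section
/- Let π : (Z, U) → (Y, S) be a factor map of topological dynamical systems and f ∈ C(Z). Then α(f) = sup over ergodic ν ∈ ∂_e M_S(Y) of ψ_f(ν), and moreover α(f) = sup over ergodic ν ∈ ∂_e M_S(Y) of the infimum of ∫ f dλ over ergodic λ ∈ ∂_e M_U(Z) with π_* λ = ν. -/
open MeasureTheory Filter Topology
open scoped ENNReal NNReal

noncomputable section

/-- The set of `U`-invariant Borel probability measures. -/
def invMeas {Z : Type*} [MeasurableSpace Z] (U : Z → Z) : Set (ProbabilityMeasure Z) :=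
  {μ | μ.toMeasure.map U = μ.toMeasure}

/-- `ψ_f(ν) = min { ∫ f dλ : λ ∈ M_U(Z), π_* λ = ν }`. -/
def psi {Z Y : Type*} [MeasurableSpace Z] [MeasurableSpace Y]
    (U : Z → Z) (π : Z → Y) (f : Z → ℝ) (ν : ProbabilityMeasure Y) : ℝ :=
  sInf {r | ∃ lam ∈ invMeas U, lam.toMeasure.map π = ν.toMeasure ∧
    r = ∫ z, f z ∂lam.toMeasure}

/-- `α(f) = sup_{ν ∈ M_S(Y)} ψ_f(ν)`. -/
def alphaF {Z Y : Type*} [MeasurableSpace Z] [MeasurableSpace Y]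
    (U : Z → Z) (S : Y → Y) (π : Z → Y) (f : Z → ℝ) : ℝ :=
  sSup {r | ∃ ν ∈ invMeas S, r = psi U π f ν}

/-!
Integration embeds the probability measures on a compact metrizable space as a compact convex
subset of `ℝ^{C(X)}`, on which push-forwards act by continuous linear maps and whose invariant
part has the ergodic measures as extreme points. The invariant lifts of an ergodic `ν` form a
face, so the minimum `ψ_f(ν)` is attained at an ergodic lift. If `ψ_f ≤ c` on the ergodic
measures, then the push-forwards of invariant measures `λ` with `∫ f dλ ≤ c` form a closed convex
set containing all ergodic measures, hence by Krein–Milman all invariant ones, which says that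
`ψ_f ≤ c` throughout `M_S(Y)`.
-/

theorem csSup_eq_csSup_of_upperBounds_eq {α : Type*} [ConditionallyCompleteLinearOrder α]
    [NoMinOrder α] {s t : Set α} (h : upperBounds s = upperBounds t) : sSup s = sSup t := by
  have sSup_eq_sSup_empty (u : Set α) (hu : ¬∃ a, IsLUB u a) : sSup u = sSup ∅ := by
    obtain rfl | hne := u.eq_empty_or_nonempty
    · rfl
    · exact csSup_of_not_bddAbove fun hb ↦ hu ⟨_, isLUB_csSup hne hb⟩
  by_cases hs : ∃ a, IsLUB s a
  · obtain ⟨a, ha⟩ := hs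
    have ha' : IsLUB t a := (isLUB_congr h).1 ha
    rw [ha.csSup_eq ha.nonempty, ha'.csSup_eq ha'.nonempty]
  · have ht : ¬∃ a, IsLUB t a := fun ⟨a, ha⟩ ↦ hs ⟨a, (isLUB_congr h).2 ha⟩
    rw [sSup_eq_sSup_empty s hs, sSup_eq_sSup_empty t ht]

section Convexity

variable {E F : Type*} [AddCommGroup E] [Module ℝ E] [AddCommGroup F] [Module ℝ F]

theorem isExtreme_inter_preimage {A : Set E} {B C : Set F} (L : E →ₗ[ℝ] F) (hL : Set.MapsTo L A B)
    (hC : IsExtreme ℝ B C) : IsExtreme ℝ A (A ∩ L ⁻¹' C) := by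
  refine ⟨Set.inter_subset_left, fun x hx y hy z ⟨_, hzC⟩ hz ↦ ⟨hx, ?_⟩⟩
  have hLz : L z ∈ openSegment ℝ (L x) (L y) :=
    image_openSegment ℝ L.toAffineMap x y ▸ Set.mem_image_of_mem _ hz
  exact hC.left_mem_of_mem_openSegment (hL hx) (hL hy) hzC hLz

variable [TopologicalSpace E] [T2Space E] [IsTopologicalAddGroup E] [ContinuousSMul ℝ E]

theorem exists_mem_extremePoints_forall_le [LocallyConvexSpace ℝ E] {A K : Set E}
    (hK : IsCompact K) (hne : K.Nonempty) (hAK : IsExtreme ℝ A K) (l : E →L[ℝ] ℝ) :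
    ∃ x ∈ A.extremePoints ℝ, x ∈ K ∧ ∀ y ∈ K, l x ≤ l y := by
  have hexp : IsExposed ℝ K ((-l).toExposed K) := ContinuousLinearMap.toExposed.isExposed
  obtain ⟨m, hm, hmin⟩ := hK.exists_isMinOn hne l.continuous.continuousOn
  obtain ⟨x, hx⟩ := (hexp.isCompact hK).extremePoints_nonempty
    ⟨m, hm, fun y hy ↦ neg_le_neg (hmin hy)⟩
  exact ⟨x, (hAK.trans hexp.isExtreme).extremePoints_subset_extremePoints hx, hx.1.1,
    fun y hy ↦ neg_le_neg_iff.1 (hx.1.2 y hy)⟩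

/-- The Markov–Kakutani theorem for a single map: a cluster point of the Birkhoff averages along an
orbit is fixed. -/
theorem exists_mem_eq_self_of_mapsTo {K : Set E} (hK : IsCompact K) (hconv : Convex ℝ K)
    (hne : K.Nonempty) {L : E →L[ℝ] E} (hL : Set.MapsTo L K K) : ∃ x ∈ K, L x = x := by
  obtain ⟨x₀, hx₀⟩ := hne
  let a (n : ℕ) : E := birkhoffAverage ℝ L id (n + 1) x₀
  have horbit (n : ℕ) : L^[n] x₀ ∈ K := hL.iterate n hx₀
  have haK (n : ℕ) : a n ∈ K := by
    simp only [a, birkhoffAverage, birkhoffSum, Finset.smul_sum]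
    refine hconv.sum_mem (fun _ _ ↦ by positivity) ?_ fun k _ ↦ horbit k
    simp [mul_inv_cancel₀ (Nat.cast_add_one_ne_zero (R := ℝ) n)]
  have hLa (n : ℕ) : L (a n) - a n = ((n + 1 : ℕ) : ℝ)⁻¹ • (L^[n + 1] x₀ - x₀) := by
    have hmap : L (a n) = birkhoffAverage ℝ L id (n + 1) (L x₀) := by
      rw [map_birkhoffAverage ℝ ℝ L]
      simp [birkhoffAverage, birkhoffSum, ← Function.iterate_succ_apply,
        Function.iterate_succ_apply']
    rw [hmap, birkhoffAverage_apply_sub_birkhoffAverage, id, id]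
  have hlim : Tendsto (fun n ↦ L (a n) - a n) atTop (𝓝 0) := by
    simp_rw [hLa]
    exact ((hK.isVonNBounded ℝ).sub (hK.isVonNBounded ℝ)).smul_tendsto_zero
      (.of_forall fun n ↦ Set.sub_mem_sub (horbit (n + 1)) hx₀)
      ((tendsto_inv_atTop_nhds_zero_nat (𝕜 := ℝ)).comp (tendsto_add_atTop_nat 1))
  obtain ⟨x, hx, hax⟩ := hK.ultrafilter_le_nhds ((hyperfilter ℕ).map a)
    (tendsto_principal.2 (.of_forall haK))
  have hdiff : Tendsto (fun n ↦ L (a n) - a n) (hyperfilter ℕ) (𝓝 (L x - x)) :=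
    (((L.continuous.sub continuous_id).tendsto x).comp hax)
  exact ⟨x, hx, sub_eq_zero.1
    (tendsto_nhds_unique hdiff (hlim.mono_left Nat.hyperfilter_le_atTop))⟩

end Convexity

section IntegralFunctional

variable {X Y : Type*} [TopologicalSpace X] [TopologicalSpace Y]

/-- The push-forward of measures along `p`, extended to a continuous linear map on the space
`ℝ^{C(X)}` of all functions `C(X, ℝ) → ℝ` with the product topology. -/
def pushforwardFunctional (p : C(X, Y)) : (C(X, ℝ) → ℝ) →L[ℝ] (C(Y, ℝ) → ℝ) :=
  ContinuousLinearMap.pi fun g ↦ ContinuousLinearMap.proj (g.comp p)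

theorem pushforwardFunctional_comm {T : C(X, X)} {S : C(Y, Y)} {p : C(X, Y)}
    (h : S.comp p = p.comp T) (φ : C(X, ℝ) → ℝ) :
    pushforwardFunctional p (pushforwardFunctional T φ) =
      pushforwardFunctional S (pushforwardFunctional p φ) :=
  funext fun g ↦ congrArg φ (congrArg g.comp h).symm

variable [MeasurableSpace X] [MeasurableSpace Y]

/-- Integration against `μ`, as a point of the locally convex space `ℝ^{C(X)}` of all functions on
`C(X, ℝ)` with the product topology. On a compact metrizable space this embeds the probability
measures affinely, which makes the convexity theorems for topological vector spaces available. -/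
def integralFunctional (μ : ProbabilityMeasure X) : C(X, ℝ) → ℝ :=
  fun g ↦ ∫ x, g x ∂(μ : Measure X)

theorem pushforwardFunctional_integralFunctional [BorelSpace X] [BorelSpace Y] (p : C(X, Y))
    (μ : ProbabilityMeasure X) :
    pushforwardFunctional p (integralFunctional μ) =
      integralFunctional (μ.map p.measurable.aemeasurable) :=
  funext fun g ↦
    (integral_map p.measurable.aemeasurable g.continuous.aestronglyMeasurable).symm

theorem integralFunctional_injective [BorelSpace X] [TopologicalSpace.MetrizableSpace X] :
    Function.Injective (integralFunctional : ProbabilityMeasure X → C(X, ℝ) → ℝ) := fun _ _ h ↦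
  ProbabilityMeasure.toMeasure_injective <|
    ext_of_forall_integral_eq_of_IsFiniteMeasure fun g ↦ congrFun h g.toContinuousMap

theorem pushforwardFunctional_eq_integralFunctional_iff [BorelSpace X] [BorelSpace Y]
    [TopologicalSpace.MetrizableSpace Y]
    {p : C(X, Y)} {μ : ProbabilityMeasure X} {ν : ProbabilityMeasure Y} :
    pushforwardFunctional p (integralFunctional μ) = integralFunctional ν ↔
      (μ : Measure X).map p = ν := by
  rw [pushforwardFunctional_integralFunctional, integralFunctional_injective.eq_iff,
    ← ProbabilityMeasure.toMeasure_injective.eq_iff]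
  rfl

variable [CompactSpace X] [BorelSpace X]

theorem continuous_integralFunctional :
    Continuous (integralFunctional : ProbabilityMeasure X → C(X, ℝ) → ℝ) :=
  continuous_pi fun g ↦ ProbabilityMeasure.continuous_integral_continuousMap g

variable [TopologicalSpace.MetrizableSpace X]

theorem integralFunctional_eq_add_smul_iff {μ μ₁ μ₂ : ProbabilityMeasure X} {a b : ℝ≥0} :
    integralFunctional μ = a • integralFunctional μ₁ + b • integralFunctional μ₂ ↔
      (μ : Measure X) = a • (μ₁ : Measure X) + b • (μ₂ : Measure X) := by
  have hmix (g : C(X, ℝ)) : ∫ x, g x ∂(a • (μ₁ : Measure X) + b • (μ₂ : Measure X)) =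
      (a • integralFunctional μ₁ + b • integralFunctional μ₂) g := by
    have hint (ν : Measure X) [IsFiniteMeasure ν] : Integrable g ν :=
      g.continuous.integrable_of_hasCompactSupport (.of_compactSpace g)
    rw [integral_add_measure (hint _) (hint _), integral_smul_nnreal_measure,
      integral_smul_nnreal_measure]
    rfl
  refine ⟨fun h ↦ ext_of_forall_integral_eq_of_IsFiniteMeasure fun g ↦ ?_,
    fun h ↦ funext fun g ↦ ?_⟩
  · exact (congrFun h g.toContinuousMap).trans (hmix g.toContinuousMap).symm
  · rw [← hmix, ← h, integralFunctional]

theorem integralFunctional_mem_openSegment_iff {μ μ₁ μ₂ : ProbabilityMeasure X} :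
    integralFunctional μ ∈ openSegment ℝ (integralFunctional μ₁) (integralFunctional μ₂) ↔
      (μ : Measure X) ∈ openSegment ℝ≥0∞ (μ₁ : Measure X) (μ₂ : Measure X) := by
  constructor
  · rintro ⟨a, b, ha, hb, hab, h⟩
    lift a to ℝ≥0 using ha.le
    lift b to ℝ≥0 using hb.le
    exact ⟨a, b, mod_cast ha, mod_cast hb, mod_cast hab,
      (integralFunctional_eq_add_smul_iff.1 h.symm).symm⟩
  · rintro ⟨a, b, ha, hb, hab, h⟩
    lift a to ℝ≥0 using ne_top_of_le_ne_top ENNReal.one_ne_top (hab ▸ le_self_add)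
    lift b to ℝ≥0 using ne_top_of_le_ne_top ENNReal.one_ne_top (hab ▸ le_add_self)
    exact ⟨a, b, mod_cast ha, mod_cast hb, mod_cast hab,
      (integralFunctional_eq_add_smul_iff.2 h.symm).symm⟩

theorem convex_range_integralFunctional :
    Convex ℝ (Set.range (integralFunctional : ProbabilityMeasure X → C(X, ℝ) → ℝ)) := by
  rintro _ ⟨μ₁, rfl⟩ _ ⟨μ₂, rfl⟩ a b ha hb hab
  lift a to ℝ≥0 using ha
  lift b to ℝ≥0 using hb
  have hab' : (a : ℝ≥0∞) + b = 1 := mod_cast hab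
  exact ⟨⟨a • (μ₁ : Measure X) + b • (μ₂ : Measure X), ⟨by simpa using hab'⟩⟩,
    integralFunctional_eq_add_smul_iff.2 rfl⟩

theorem isCompact_range_integralFunctional :
    IsCompact (Set.range (integralFunctional : ProbabilityMeasure X → C(X, ℝ) → ℝ)) :=
  isCompact_range continuous_integralFunctional

end IntegralFunctional

section Invariant

variable {X : Type*} [TopologicalSpace X] [TopologicalSpace.MetrizableSpace X]
  [MeasurableSpace X] [BorelSpace X] {T : C(X, X)}

theorem image_integralFunctional_invMeas : integralFunctional '' invMeas T =
    Set.range integralFunctional ∩ {φ | pushforwardFunctional T φ = φ} := by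
  ext φ
  constructor
  · rintro ⟨μ, hμ, rfl⟩
    exact ⟨⟨μ, rfl⟩, pushforwardFunctional_eq_integralFunctional_iff.2 hμ⟩
  · rintro ⟨⟨μ, rfl⟩, hμ⟩
    exact ⟨μ, pushforwardFunctional_eq_integralFunctional_iff.1 hμ, rfl⟩

variable [CompactSpace X]

theorem isCompact_image_integralFunctional_invMeas :
    IsCompact (integralFunctional '' invMeas T) := by
  rw [image_integralFunctional_invMeas]
  exact isCompact_range_integralFunctional.inter_right
    (isClosed_eq (pushforwardFunctional T).continuous continuous_id)

theorem convex_image_integralFunctional_invMeas : Convex ℝ (integralFunctional '' invMeas T) := by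
  rw [image_integralFunctional_invMeas]
  exact convex_range_integralFunctional.inter
    (LinearMap.eqLocus (pushforwardFunctional T).toLinearMap LinearMap.id).convex

theorem integralFunctional_mem_extremePoints_iff {μ : ProbabilityMeasure X} :
    integralFunctional μ ∈ (integralFunctional '' invMeas T).extremePoints ℝ ↔
      Ergodic T (μ : Measure X) := by
  rw [Ergodic.iff_mem_extremePoints, mem_extremePoints_iff_left, mem_extremePoints_iff_left,
    integralFunctional_injective.mem_set_image]
  refine and_congr ⟨fun h ↦ ⟨⟨T.measurable, h⟩, inferInstance⟩, fun h ↦ h.1.map_eq⟩ ⟨?_, ?_⟩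
  · rintro hext ν₁ ⟨h₁, _⟩ ν₂ ⟨h₂, _⟩ hseg
    have heq := hext _ ⟨⟨ν₁, ‹_›⟩, h₁.map_eq, rfl⟩ _ ⟨⟨ν₂, ‹_›⟩, h₂.map_eq, rfl⟩
      (integralFunctional_mem_openSegment_iff.2 hseg)
    exact congrArg ProbabilityMeasure.toMeasure (integralFunctional_injective heq)
  · rintro hext _ ⟨μ₁, h₁, rfl⟩ _ ⟨μ₂, h₂, rfl⟩ hseg
    have heq := hext _ ⟨⟨T.measurable, h₁⟩, inferInstance⟩ _ ⟨⟨T.measurable, h₂⟩, inferInstance⟩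
      (integralFunctional_mem_openSegment_iff.1 hseg)
    exact congrArg integralFunctional (ProbabilityMeasure.toMeasure_injective heq)

theorem integralFunctional_mem_of_forall_ergodic {K : Set (C(X, ℝ) → ℝ)} (hK : IsClosed K)
    (hconv : Convex ℝ K)
    (herg : ∀ μ : ProbabilityMeasure X, Ergodic T (μ : Measure X) → integralFunctional μ ∈ K)
    {μ : ProbabilityMeasure X} (hμ : μ ∈ invMeas T) : integralFunctional μ ∈ K := by
  have hext : (integralFunctional '' invMeas T).extremePoints ℝ ⊆ K := by
    intro φ hφ
    obtain ⟨ν, -, rfl⟩ := hφ.1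
    exact herg ν (integralFunctional_mem_extremePoints_iff.1 hφ)
  have hmem : integralFunctional μ ∈ integralFunctional '' invMeas T := ⟨μ, hμ, rfl⟩
  rw [← closure_convexHull_extremePoints isCompact_image_integralFunctional_invMeas
    convex_image_integralFunctional_invMeas] at hmem
  exact closure_minimal (convexHull_min hext hconv) hK hmem

end Invariant

theorem exists_eq_dirac_of_ergodic_id {X : Type*} [MeasurableSpace X]
    [MeasurableSpace.CountablySeparated X] {μ : Measure X} [IsProbabilityMeasure μ]
    (hμ : Ergodic id μ) : ∃ x, μ = Measure.dirac x := by
  have : Nonempty X := nonempty_of_isProbabilityMeasure μ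
  obtain ⟨x, hx⟩ := hμ.toPreErgodic.ae_eq_const_of_ae_eq_comp measurable_id rfl
  refine ⟨x, ?_⟩
  rw [← Measure.map_id (μ := μ), Measure.map_congr hx]
  exact (Measure.map_const μ x).trans (by rw [measure_univ, one_smul])

section Psi

variable {Z Y : Type*} [MeasurableSpace Z] [MeasurableSpace Y] {U : Z → Z} {π : Z → Y} {f : Z → ℝ}
  {ν : ProbabilityMeasure Y} {lam : ProbabilityMeasure Z}

theorem psi_eq_integral_of_forall_le (hlam : lam ∈ invMeas U) (hπ : (lam : Measure Z).map π = ν)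
    (hmin : ∀ m ∈ invMeas U, (m : Measure Z).map π = ν →
      ∫ z, f z ∂(lam : Measure Z) ≤ ∫ z, f z ∂(m : Measure Z)) :
    psi U π f ν = ∫ z, f z ∂(lam : Measure Z) := by
  refine IsLeast.csInf_eq ⟨⟨lam, hlam, hπ, rfl⟩, ?_⟩
  rintro _ ⟨m, hm, hmν, rfl⟩
  exact hmin m hm hmν

theorem psi_le_integral {C : ℝ} (hf : ∀ z, ‖f z‖ ≤ C) (hlam : lam ∈ invMeas U)
    (hπ : (lam : Measure Z).map π = ν) : psi U π f ν ≤ ∫ z, f z ∂(lam : Measure Z) := by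
  refine csInf_le ⟨-C, ?_⟩ ⟨lam, hlam, hπ, rfl⟩
  rintro _ ⟨m, -, -, rfl⟩
  have hbound : ‖∫ z, f z ∂(m : Measure Z)‖ ≤ C := by
    simpa using norm_integral_le_of_norm_le_const (μ := (m : Measure Z)) (.of_forall hf)
  exact (abs_le.1 hbound).1

end Psi

section Lifts

variable {Z Y : Type*}
  [TopologicalSpace Z] [TopologicalSpace.MetrizableSpace Z] [MeasurableSpace Z] [BorelSpace Z]
  [TopologicalSpace Y] [TopologicalSpace.MetrizableSpace Y] [MeasurableSpace Y] [BorelSpace Y]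
  {U : C(Z, Z)} {S : C(Y, Y)} {π : C(Z, Y)}

theorem mapsTo_pushforwardFunctional_invMeas (hfac : S.comp π = π.comp U) :
    Set.MapsTo (pushforwardFunctional π)
      (integralFunctional '' invMeas U) (integralFunctional '' invMeas S) := by
  simp only [image_integralFunctional_invMeas]
  rintro _ ⟨⟨lam, rfl⟩, hlam⟩
  refine ⟨⟨_, (pushforwardFunctional_integralFunctional π lam).symm⟩, ?_⟩
  rw [Set.mem_ofPred_eq, ← pushforwardFunctional_comm hfac, hlam]

variable [CompactSpace Z] [CompactSpace Y]

/- The push-forwards form a closed convex set, so it suffices to lift the extreme points of the set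
of all probability measures. These are ergodic for the identity map, hence Dirac measures. -/
theorem exists_probabilityMeasure_map_eq (hsurj : Function.Surjective π)
    (ν : ProbabilityMeasure Y) : ∃ lam : ProbabilityMeasure Z, (lam : Measure Z).map π = ν := by
  have hK : IsCompact (pushforwardFunctional π '' Set.range integralFunctional) :=
    isCompact_range_integralFunctional.image (pushforwardFunctional π).continuous
  have hconv : Convex ℝ (pushforwardFunctional π '' Set.range integralFunctional) :=
    convex_range_integralFunctional.linear_image (pushforwardFunctional π).toLinearMap
  have hdirac (μ : ProbabilityMeasure Y) (hμ : Ergodic (ContinuousMap.id Y) (μ : Measure Y)) :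
      integralFunctional μ ∈ pushforwardFunctional π '' Set.range integralFunctional := by
    obtain ⟨y, hy⟩ := exists_eq_dirac_of_ergodic_id hμ
    obtain ⟨z, rfl⟩ := hsurj y
    refine ⟨_, ⟨⟨Measure.dirac z, inferInstance⟩, rfl⟩,
      pushforwardFunctional_eq_integralFunctional_iff.2 ?_⟩
    rw [hy]
    exact Measure.map_dirac' π.measurable z
  obtain ⟨_, ⟨lam, rfl⟩, hlam⟩ := integralFunctional_mem_of_forall_ergodic hK.isClosed hconv hdirac
    (μ := ν) Measure.map_id
  exact ⟨lam, pushforwardFunctional_eq_integralFunctional_iff.1 hlam⟩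

theorem exists_mem_invMeas_map_eq (hsurj : Function.Surjective π) (hfac : S.comp π = π.comp U)
    {ν : ProbabilityMeasure Y} (hν : ν ∈ invMeas S) :
    ∃ lam ∈ invMeas U, (lam : Measure Z).map π = ν := by
  let K : Set (C(Z, ℝ) → ℝ) :=
    Set.range integralFunctional ∩ pushforwardFunctional π ⁻¹' {integralFunctional ν}
  have hK : IsCompact K := isCompact_range_integralFunctional.inter_right
    (isClosed_singleton.preimage (pushforwardFunctional π).continuous)
  have hconv : Convex ℝ K := convex_range_integralFunctional.inter
    ((convex_singleton _).linear_preimage (pushforwardFunctional π).toLinearMap)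
  have hne : K.Nonempty :=
    let ⟨lam, hlam⟩ := exists_probabilityMeasure_map_eq hsurj ν
    ⟨_, ⟨lam, rfl⟩, pushforwardFunctional_eq_integralFunctional_iff.2 hlam⟩
  have hU : Set.MapsTo (pushforwardFunctional U) K K := by
    rintro _ ⟨⟨lam, rfl⟩, hlam⟩
    refine ⟨⟨_, (pushforwardFunctional_integralFunctional U lam).symm⟩, ?_⟩
    rw [Set.mem_preimage, pushforwardFunctional_comm hfac, Set.mem_singleton_iff.1 hlam]
    exact pushforwardFunctional_eq_integralFunctional_iff.2 hν
  obtain ⟨_, ⟨⟨lam, rfl⟩, hlam⟩, hfix⟩ := exists_mem_eq_self_of_mapsTo hK hconv hne hU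
  exact ⟨lam, pushforwardFunctional_eq_integralFunctional_iff.1 hfix,
    pushforwardFunctional_eq_integralFunctional_iff.1 hlam⟩

theorem exists_ergodic_lift_forall_integral_le (hsurj : Function.Surjective π)
    (hfac : S.comp π = π.comp U) (f : C(Z, ℝ)) {ν : ProbabilityMeasure Y}
    (hν : Ergodic S (ν : Measure Y)) :
    ∃ lam : ProbabilityMeasure Z, Ergodic U (lam : Measure Z) ∧ (lam : Measure Z).map π = ν ∧
      ∀ m ∈ invMeas U, (m : Measure Z).map π = ν →
        ∫ z, f z ∂(lam : Measure Z) ≤ ∫ z, f z ∂(m : Measure Z) := by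
  let K : Set (C(Z, ℝ) → ℝ) :=
    integralFunctional '' invMeas U ∩ pushforwardFunctional π ⁻¹' {integralFunctional ν}
  have mem_K {m : ProbabilityMeasure Z} (hm : m ∈ invMeas U) (hmν : (m : Measure Z).map π = ν) :
      integralFunctional m ∈ K :=
    ⟨⟨m, hm, rfl⟩, pushforwardFunctional_eq_integralFunctional_iff.2 hmν⟩
  have hK : IsCompact K := isCompact_image_integralFunctional_invMeas.inter_right
    (isClosed_singleton.preimage (pushforwardFunctional π).continuous)
  have hface : IsExtreme ℝ (integralFunctional '' invMeas U) K :=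
    isExtreme_inter_preimage (pushforwardFunctional π).toLinearMap
      (mapsTo_pushforwardFunctional_invMeas hfac)
      (isExtreme_singleton.2 (integralFunctional_mem_extremePoints_iff.2 hν))
  have hne : K.Nonempty :=
    let ⟨_, hm, hmν⟩ := exists_mem_invMeas_map_eq hsurj hfac hν.map_eq
    ⟨_, mem_K hm hmν⟩
  obtain ⟨_, hext, ⟨⟨lam, -, rfl⟩, hlam⟩, hmin⟩ := exists_mem_extremePoints_forall_le hK hne hface
    (ContinuousLinearMap.proj (R := ℝ) (φ := fun _ : C(Z, ℝ) ↦ ℝ) f)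
  exact ⟨lam, integralFunctional_mem_extremePoints_iff.1 hext,
    pushforwardFunctional_eq_integralFunctional_iff.1 hlam, fun m hm hmν ↦ hmin _ (mem_K hm hmν)⟩

theorem psi_eq_sInf_ergodic (hsurj : Function.Surjective π) (hfac : S.comp π = π.comp U)
    (f : C(Z, ℝ)) {ν : ProbabilityMeasure Y} (hν : Ergodic S (ν : Measure Y)) :
    psi U π f ν = sInf {t | ∃ lam ∈ invMeas U, Ergodic U (lam : Measure Z) ∧
      (lam : Measure Z).map π = ν ∧ t = ∫ z, f z ∂(lam : Measure Z)} := by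
  obtain ⟨lam, herg, hlam, hmin⟩ := exists_ergodic_lift_forall_integral_le hsurj hfac f hν
  rw [psi_eq_integral_of_forall_le herg.map_eq hlam hmin]
  refine (IsLeast.csInf_eq ?_).symm
  refine ⟨⟨lam, herg.map_eq, herg, hlam, rfl⟩, ?_⟩
  rintro _ ⟨m, hm, -, hmν, rfl⟩
  exact hmin m hm hmν

theorem psi_le_of_forall_ergodic (hsurj : Function.Surjective π) (hfac : S.comp π = π.comp U)
    (f : C(Z, ℝ)) {c : ℝ}
    (herg : ∀ ν : ProbabilityMeasure Y, Ergodic S (ν : Measure Y) → psi U π f ν ≤ c)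
    {ν : ProbabilityMeasure Y} (hν : ν ∈ invMeas S) : psi U π f ν ≤ c := by
  let K : Set (C(Z, ℝ) → ℝ) := integralFunctional '' invMeas U ∩ {φ | φ f ≤ c}
  have hK : IsCompact K := isCompact_image_integralFunctional_invMeas.inter_right
    (isClosed_le (continuous_apply f) continuous_const)
  have hconv : Convex ℝ K := convex_image_integralFunctional_invMeas.inter
    (convex_halfSpace_le
      (LinearMap.proj (R := ℝ) (φ := fun _ : C(Z, ℝ) ↦ ℝ) f).isLinear c)
  have hext (ν' : ProbabilityMeasure Y) (hν' : Ergodic S (ν' : Measure Y)) :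
      integralFunctional ν' ∈ pushforwardFunctional π '' K := by
    obtain ⟨lam, hlam, hπ, hmin⟩ := exists_ergodic_lift_forall_integral_le hsurj hfac f hν'
    refine ⟨_, ⟨⟨lam, hlam.map_eq, rfl⟩, ?_⟩,
      pushforwardFunctional_eq_integralFunctional_iff.2 hπ⟩
    exact (psi_eq_integral_of_forall_le hlam.map_eq hπ hmin).symm.trans_le (herg ν' hν')
  obtain ⟨_, ⟨⟨lam, hlam, rfl⟩, hle⟩, hπ⟩ := integralFunctional_mem_of_forall_ergodic
    (hK.image (pushforwardFunctional π).continuous).isClosed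
    (hconv.linear_image (pushforwardFunctional π).toLinearMap) hext hν
  exact (psi_le_integral f.norm_coe_le_norm hlam
    (pushforwardFunctional_eq_integralFunctional_iff.1 hπ)).trans hle

theorem alphaF_eq_sSup_ergodic (hsurj : Function.Surjective π) (hfac : S.comp π = π.comp U)
    (f : C(Z, ℝ)) :
    alphaF U S π f =
      sSup {r | ∃ ν ∈ invMeas S, Ergodic S (ν : Measure Y) ∧ r = psi U π f ν} := by
  refine csSup_eq_csSup_of_upperBounds_eq (Set.Subset.antisymm ?_ ?_)
  · rintro c hc _ ⟨ν, hν, -, rfl⟩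
    exact hc ⟨ν, hν, rfl⟩
  · rintro c hc _ ⟨ν, hν, rfl⟩
    exact psi_le_of_forall_ergodic hsurj hfac f
      (fun ν' herg ↦ hc ⟨ν', herg.map_eq, herg, rfl⟩) hν

end Lifts

theorem stmt2_general
    {Z Y : Type*}
    [TopologicalSpace Z] [CompactSpace Z] [TopologicalSpace.MetrizableSpace Z]
    [MeasurableSpace Z] [BorelSpace Z]
    [TopologicalSpace Y] [CompactSpace Y] [TopologicalSpace.MetrizableSpace Y]
    [MeasurableSpace Y] [BorelSpace Y]
    (U : C(Z, Z)) (S : C(Y, Y)) (π : C(Z, Y)) (hπsurj : Function.Surjective π)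
    (hfactor : S.comp π = π.comp U) (f : C(Z, ℝ)) :
    alphaF U S π f
      = sSup {r | ∃ ν ∈ invMeas S, Ergodic S ν.toMeasure ∧ r = psi U π f ν} ∧
    alphaF U S π f
      = sSup {r | ∃ ν ∈ invMeas S, Ergodic S ν.toMeasure ∧
          r = sInf {t | ∃ lam ∈ invMeas U, Ergodic U lam.toMeasure ∧
            lam.toMeasure.map π = ν.toMeasure ∧ t = ∫ z, f z ∂lam.toMeasure}} := by
  have hα := alphaF_eq_sSup_ergodic hπsurj hfactor f
  refine ⟨hα, hα.trans (congrArg sSup (Set.ext fun r ↦ ?_))⟩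
  refine exists_congr fun ν ↦ and_congr_right fun _ ↦ and_congr_right fun herg ↦ ?_
  rw [psi_eq_sInf_ergodic hπsurj hfactor f herg]

/-- `α(f)` equals the supremum of `ψ_f` over ergodic `ν`, and also the
supremum over ergodic `ν` of the infimum of `∫ f dλ` over ergodic `λ ∈ M_U(Z)` with
`π_* λ = ν`. -/
theorem stmt2
    {Z Y : Type*}
    [TopologicalSpace Z] [CompactSpace Z] [TopologicalSpace.MetrizableSpace Z]
    [MeasurableSpace Z] [BorelSpace Z]
    [TopologicalSpace Y] [CompactSpace Y] [TopologicalSpace.MetrizableSpace Y]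
    [MeasurableSpace Y] [BorelSpace Y]
    (U : Z ≃ₜ Z) (S : Y ≃ₜ Y) (π : Z → Y)
    (hπcont : Continuous π) (hπsurj : Function.Surjective π)
    (hfactor : ⇑S ∘ π = π ∘ ⇑U)
    (f : Z → ℝ) (hf : Continuous f) :
    alphaF (⇑U) (⇑S) π f
      = sSup {r | ∃ ν ∈ invMeas ⇑S, Ergodic (⇑S) ν.toMeasure ∧ r = psi (⇑U) π f ν} ∧
    alphaF (⇑U) (⇑S) π f
      = sSup {r | ∃ ν ∈ invMeas ⇑S, Ergodic (⇑S) ν.toMeasure ∧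
          r = sInf {t | ∃ lam ∈ invMeas ⇑U, Ergodic (⇑U) lam.toMeasure ∧
            lam.toMeasure.map π = ν.toMeasure ∧ t = ∫ z, f z ∂lam.toMeasure}} := by
  exact stmt2_general (U : C(Z, Z)) (S : C(Y, Y)) ⟨π, hπcont⟩ hπsurj
    (DFunLike.coe_injective hfactor) ⟨f, hf⟩
end
end

section
/- Let (X, T) and (Y, S) be topological dynamical systems such that (Y, S) has the periodic specification property, and let f ∈ C(X × Y). Then α(f) ≥ δ(f). -/
open MeasureTheory Filter Topology
open scoped ENNReal NNReal

noncomputable section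

/-- Birkhoff average `A_k f(x, y) = (1/k) Σ_{j<k} f(T^j x, S^j y)`. -/
def birk2 {X Y : Type*} (T : X → X) (S : Y → Y) (f : X × Y → ℝ) (k : ℕ) (x : X) (y : Y) : ℝ :=
  (k : ℝ)⁻¹ * ∑ j ∈ Finset.range k, f ((Prod.map T S)^[j] (x, y))

/-- `ψ_f(ν) = min { ∫ f dλ : λ ∈ M_{T×S}(X × Y), (π_Y)_* λ = ν }`. -/
def psi2 {X Y : Type*} [MeasurableSpace X] [MeasurableSpace Y]
    (T : X → X) (S : Y → Y) (f : X × Y → ℝ) (ν : ProbabilityMeasure Y) : ℝ :=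
  sInf {r | ∃ lam ∈ invMeas (Prod.map T S), lam.toMeasure.map Prod.snd = ν.toMeasure ∧
    r = ∫ p, f p ∂lam.toMeasure}

/-- `α(f) = sup_{ν ∈ M_S(Y)} ψ_f(ν)`. -/
def alpha2 {X Y : Type*} [MeasurableSpace X] [MeasurableSpace Y]
    (T : X → X) (S : Y → Y) (f : X × Y → ℝ) : ℝ :=
  sSup {r | ∃ ν ∈ invMeas S, r = psi2 T S f ν}

/-- `R_f`: points `(x, y)` whose Birkhoff averages converge. -/
def reg2 {X Y : Type*} (T : X → X) (S : Y → Y) (f : X × Y → ℝ) : Set (X × Y) :=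
  {p | ∃ L : ℝ, Tendsto (fun k : ℕ => birk2 T S f k p.1 p.2) atTop (𝓝 L)}

/-- `β(f) = sup_{y ∈ π_Y(R_f)} inf_{(x,y) ∈ R_f} lim_k A_k f(x, y)`. -/
def beta2 {X Y : Type*} (T : X → X) (S : Y → Y) (f : X × Y → ℝ) : ℝ :=
  sSup {r | ∃ y : Y, (∃ x : X, (x, y) ∈ reg2 T S f) ∧
    r = sInf {L | ∃ x : X, (x, y) ∈ reg2 T S f ∧
      Tendsto (fun k : ℕ => birk2 T S f k x y) atTop (𝓝 L)}}

/-- `γ(f) = sup_{y ∈ Y} inf_{x ∈ X} limsup_k A_k f(x, y)`. -/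
def gamma2 {X Y : Type*} (T : X → X) (S : Y → Y) (f : X × Y → ℝ) : ℝ :=
  ⨆ y : Y, ⨅ x : X, limsup (fun k : ℕ => birk2 T S f k x y) atTop

/-- `δ(f) = limsup_k max_{y ∈ Y} min_{x ∈ X} A_k f(x, y)`. -/
def delta2 {X Y : Type*} (T : X → X) (S : Y → Y) (f : X × Y → ℝ) : ℝ :=
  limsup (fun k : ℕ => ⨆ y : Y, ⨅ x : X, birk2 T S f k x y) atTop

/-- The invariant probability measures supported on a single closed (periodic) orbit. -/
def Mco {Z : Type*} [MeasurableSpace Z] (U : Z → Z) : Set (ProbabilityMeasure Z) :=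
  {μ | ∃ (k : ℕ) (z : Z), 0 < k ∧ U^[k] z = z ∧
    μ.toMeasure = (k : ℝ≥0∞)⁻¹ • ∑ j ∈ Finset.range k, Measure.dirac (U^[j] z)}

/-- `α_per(f)`: as `α(f)`, but with both measures ranging over closed-orbit measures. -/
def alphaPer2 {X Y : Type*} [MeasurableSpace X] [MeasurableSpace Y]
    (T : X → X) (S : Y → Y) (f : X × Y → ℝ) : ℝ :=
  sSup {r | ∃ ν ∈ Mco S,
    r = sInf {t | ∃ lam ∈ Mco (Prod.map T S), lam.toMeasure.map Prod.snd = ν.toMeasure ∧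
      t = ∫ p, f p ∂lam.toMeasure}}

/-- The set of periodic points. -/
def perPts {Z : Type*} (U : Z → Z) : Set Z :=
  {z | ∃ t : ℕ, 0 < t ∧ U^[t] z = z}

/-- `δ_per(f) = limsup_k sup_{y ∈ Per_S(Y)} inf_{x ∈ Per_T(X)} A_k f(x, y)`. -/
def deltaPer2 {X Y : Type*} (T : X → X) (S : Y → Y) (f : X × Y → ℝ) : ℝ :=
  limsup (fun k : ℕ => sSup {r | ∃ y ∈ perPts S,
    r = sInf {t | ∃ x ∈ perPts T, t = birk2 T S f k x y}}) atTop

/-- The `j`-th power (`j : ℤ`) of a homeomorphism, applied to a point. -/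
def zit {X : Type*} [TopologicalSpace X] (T : X ≃ₜ X) (j : ℤ) (x : X) : X :=
  (T.toEquiv ^ j) x

/-- The specification property for `(X, T)` (with respect to the metric of `X`):
for every `η > 0` there is `D = D(η)` such that every `D`-spaced specification
`ξ = (x_i, [a_i, b_i])_{i=1}^n` admits an `η`-tracing point. -/
def SpecProp {X : Type*} [MetricSpace X] (T : X ≃ₜ X) : Prop :=
  ∀ η : ℝ, 0 < η → ∃ D : ℕ, 0 < D ∧
    ∀ (n : ℕ) (x : Fin (n + 1) → X) (a b : Fin (n + 1) → ℤ),
      (∀ i, a i ≤ b i) →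
      (∀ i : Fin n, (D : ℤ) ≤ a i.succ - b i.castSucc) →
      ∃ x' : X, ∀ i : Fin (n + 1), ∀ j : ℤ, a i ≤ j → j ≤ b i →
        dist (zit T j x') (zit T j (x i)) < η

/-- The periodic specification property for `(X, T)`: as `SpecProp`, but the tracing
point can moreover be chosen of period `b_n - a_1 + D`. -/
def PerSpecProp {X : Type*} [MetricSpace X] (T : X ≃ₜ X) : Prop :=
  ∀ η : ℝ, 0 < η → ∃ D : ℕ, 0 < D ∧
    ∀ (n : ℕ) (x : Fin (n + 1) → X) (a b : Fin (n + 1) → ℤ),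
      (∀ i, a i ≤ b i) →
      (∀ i : Fin n, (D : ℤ) ≤ a i.succ - b i.castSucc) →
      ∃ x' : X, (∀ i : Fin (n + 1), ∀ j : ℤ, a i ≤ j → j ≤ b i →
          dist (zit T j x') (zit T j (x i)) < η) ∧
        zit T (b (Fin.last n) - a 0 + (D : ℤ)) x' = x'

/-!
By periodic closing, the points `y` in the maximum defining `δ(f)` may be replaced, at the cost of
an arbitrarily small error, by points `w` of some period `p`, the average over `k` steps becoming
the average over one full period. Let `ν` be the invariant measure on the orbit of `w`, and let
`L` be the minimum over `x` of the averages of `f` over the first `p` points of the orbit of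
`(x, w)`. Almost every point for a lift `λ` of `ν` enters the fibre over `w`, where averages over
whole numbers of periods are at least `L`; the delay before the entry does not affect the limit of
the averages, so `∫ f dλ ≥ L`. Lifts exist by the Krylov–Bogolyubov theorem for `T^p`: if `μ` is
`T^p`-invariant, then the average of `μ × δ_w` over one period projects to `ν`. Hence
`α(f) ≥ ψ_f(ν) ≥ L`.
-/

section BirkhoffAverage

variable {Z E : Type*}

lemma birkhoffSum_mul [AddCommMonoid E] (U : Z → Z) (g : Z → E) (m n : ℕ) (z : Z) :
    birkhoffSum U g (m * n) z = birkhoffSum U^[m] (birkhoffSum U g m) n z := by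
  induction n with
  | zero => simp only [mul_zero, birkhoffSum_zero]
  | succ n ih => rw [Nat.mul_succ, birkhoffSum_add, ih, birkhoffSum_succ, Function.iterate_mul]

lemma birkhoffAverage_mul (R : Type*) [DivisionSemiring R] [AddCommMonoid E] [Module R E]
    (U : Z → Z) (g : Z → E) (m n : ℕ) (z : Z) :
    birkhoffAverage R U g (m * n) z = birkhoffAverage R U^[m] (birkhoffAverage R U g m) n z := by
  have hsum : birkhoffSum U^[m] (birkhoffAverage R U g m) n z =
      (m : R)⁻¹ • birkhoffSum U g (m * n) z := by
    rw [birkhoffSum_mul, birkhoffSum, birkhoffSum, Finset.smul_sum]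
    rfl
  rw [birkhoffAverage, birkhoffAverage, hsum, smul_smul, Nat.cast_mul, mul_inv_rev]

lemma le_birkhoffAverage_of_mapsTo {U : Z → Z} {g : Z → ℝ} {B : Set Z} {L : ℝ}
    (hUB : Set.MapsTo U B B) (hL : ∀ z ∈ B, L ≤ g z) {n : ℕ} (hn : n ≠ 0) {z : Z} (hz : z ∈ B) :
    L ≤ birkhoffAverage ℝ U g n z := by
  have hn' : (0 : ℝ) < n := by positivity
  rw [birkhoffAverage, smul_eq_mul, ← div_eq_inv_mul, le_div_iff₀' hn', ← nsmul_eq_mul]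
  simpa only [Finset.card_range, birkhoffSum] using
    Finset.card_nsmul_le_sum (Finset.range n) _ L fun j _ => hL _ (hUB.iterate j hz)

lemma natCast_smul_birkhoffAverage (R : Type*) [DivisionSemiring R] [CharZero R] [AddCommMonoid E]
    [Module R E] (U : Z → Z) (g : Z → E) (n : ℕ) (z : Z) :
    (n : R) • birkhoffAverage R U g n z = birkhoffSum U g n z := by
  rcases eq_or_ne n 0 with rfl | hn
  · simp only [birkhoffSum_zero, Nat.cast_zero, zero_smul]
  · exact smul_inv_smul₀ (Nat.cast_ne_zero.2 hn) _

variable [NormedAddCommGroup E] {U : Z → Z} {g : Z → E} {M : ℝ}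

lemma norm_birkhoffSum_le (hg : ∀ z, ‖g z‖ ≤ M) (n : ℕ) (z : Z) :
    ‖birkhoffSum U g n z‖ ≤ n * M := by
  simpa only [birkhoffSum, Finset.card_range, nsmul_eq_mul, Finset.sum_const] using
    norm_sum_le_of_le (Finset.range n) fun j _ => hg (U^[j] z)

variable [NormedSpace ℝ E]

lemma norm_birkhoffAverage_le (hg : ∀ z, ‖g z‖ ≤ M) (n : ℕ) (z : Z) :
    ‖birkhoffAverage ℝ U g n z‖ ≤ M := by
  have hM : 0 ≤ M := (norm_nonneg _).trans (hg z)
  rw [birkhoffAverage, norm_smul, norm_inv, Real.norm_natCast]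
  exact inv_mul_le_of_le_mul₀ n.cast_nonneg hM (norm_birkhoffSum_le hg n z)

lemma dist_birkhoffAverage_le_of_forall_dist_le {ε : ℝ} (hε : 0 ≤ ε) {n : ℕ} {z w : Z}
    (h : ∀ j < n, dist (g (U^[j] z)) (g (U^[j] w)) ≤ ε) :
    dist (birkhoffAverage ℝ U g n z) (birkhoffAverage ℝ U g n w) ≤ ε := by
  refine (dist_birkhoffAverage_birkhoffAverage_le ℝ U g n z w).trans
    (div_le_of_le_mul₀ n.cast_nonneg hε ?_)
  simpa only [Finset.card_range, nsmul_eq_mul, mul_comm] using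
    Finset.sum_le_card_nsmul _ _ ε fun j hj => h j (Finset.mem_range.1 hj)

lemma dist_birkhoffAverage_le_of_le (hg : ∀ z, ‖g z‖ ≤ M) {k p : ℕ} (hkp : k ≤ p) (z : Z) :
    dist (birkhoffAverage ℝ U g k z) (birkhoffAverage ℝ U g p z) ≤ 2 * M * ((p - k) / p) := by
  obtain ⟨q, rfl⟩ := Nat.exists_eq_add_of_le hkp
  rcases eq_or_ne (k + q) 0 with hp | hp
  · obtain ⟨rfl, rfl⟩ := Nat.add_eq_zero_iff.1 hp
    simp
  have hp' : (0 : ℝ) < (k + q : ℕ) := by positivity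
  have hsplit : ((k + q : ℕ) : ℝ) • (birkhoffAverage ℝ U g k z - birkhoffAverage ℝ U g (k + q) z) =
      (q : ℝ) • birkhoffAverage ℝ U g k z - birkhoffSum U g q (U^[k] z) := by
    rw [smul_sub, natCast_smul_birkhoffAverage, birkhoffSum_add, Nat.cast_add, add_smul,
      natCast_smul_birkhoffAverage]
    abel
  have hnorm : ((k + q : ℕ) : ℝ) *
      dist (birkhoffAverage ℝ U g k z) (birkhoffAverage ℝ U g (k + q) z) ≤ q * M + q * M := by
    rw [dist_eq_norm, ← Real.norm_natCast, ← norm_smul, hsplit]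
    refine norm_sub_le_of_le ?_ (norm_birkhoffSum_le hg q _)
    rw [norm_smul, Real.norm_natCast]
    gcongr
    exact norm_birkhoffAverage_le hg k z
  rw [mul_div_assoc', le_div_iff₀' hp']
  refine hnorm.trans_eq ?_
  push_cast
  ring

lemma dist_birkhoffAverage_le_of_shadow (hg : ∀ z, ‖g z‖ ≤ M) {ε c : ℝ} (hε : 0 ≤ ε) (hc : 0 ≤ c)
    {k p : ℕ} (hkp : k ≤ p) (hpk : p ≤ (1 + c) * k) {z w : Z}
    (h : ∀ j < k, dist (g (U^[j] z)) (g (U^[j] w)) ≤ ε) :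
    dist (birkhoffAverage ℝ U g k z) (birkhoffAverage ℝ U g p w) ≤ ε + 2 * M * c := by
  have hM : 0 ≤ M := (norm_nonneg _).trans (hg z)
  have hkp' : (k : ℝ) ≤ p := Nat.cast_le.2 hkp
  have hexcess : ((p : ℝ) - k) / p ≤ c :=
    div_le_of_le_mul₀ p.cast_nonneg hc (by nlinarith)
  calc dist (birkhoffAverage ℝ U g k z) (birkhoffAverage ℝ U g p w)
      ≤ dist (birkhoffAverage ℝ U g k z) (birkhoffAverage ℝ U g k w) +
        dist (birkhoffAverage ℝ U g k w) (birkhoffAverage ℝ U g p w) := dist_triangle _ _ _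
    _ ≤ ε + 2 * M * ((p - k) / p) := add_le_add (dist_birkhoffAverage_le_of_forall_dist_le hε h)
        (dist_birkhoffAverage_le_of_le hg hkp w)
    _ ≤ ε + 2 * M * c := by gcongr

lemma tendsto_birkhoffAverage_iterate_sub_birkhoffAverage
    (hg : Bornology.IsBounded (Set.range g)) (m : ℕ) (z : Z) :
    Tendsto (fun n => birkhoffAverage ℝ U g n (U^[m] z) - birkhoffAverage ℝ U g n z)
      atTop (𝓝 0) := by
  induction m with
  | zero => simp
  | succ m ih =>
    simpa [Function.iterate_succ_apply'] using
      (tendsto_birkhoffAverage_apply_sub_birkhoffAverage' ℝ hg U (U^[m] z)).add ih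

end BirkhoffAverage

section InvariantMeasure

variable {Z E : Type*} [MeasurableSpace Z] [NormedAddCommGroup E] [NormedSpace ℝ E]
  {U : Z → Z} {μ : Measure Z}

lemma integrable_birkhoffAverage (hU : MeasurePreserving U μ μ) {g : Z → E} (hg : Integrable g μ)
    (n : ℕ) : Integrable (birkhoffAverage ℝ U g n) μ :=
  (integrable_finsetSum _ fun j _ => (hU.iterate j).integrable_comp_of_integrable hg).smul
    (n : ℝ)⁻¹

lemma integral_birkhoffAverage (hU : MeasurePreserving U μ μ) {g : Z → E} (hg : Integrable g μ)
    {n : ℕ} (hn : n ≠ 0) : ∫ z, birkhoffAverage ℝ U g n z ∂μ = ∫ z, g z ∂μ := by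
  have hiter (j : ℕ) : ∫ z, g (U^[j] z) ∂μ = ∫ z, g z ∂μ := by
    have hj := hU.iterate j
    rw [← integral_map hj.aemeasurable (hj.map_eq.symm ▸ hg.aestronglyMeasurable), hj.map_eq]
  have hsum : ∫ z, birkhoffSum U g n z ∂μ = (n : ℝ) • ∫ z, g z ∂μ := by
    unfold birkhoffSum
    rw [integral_finsetSum (f := fun j z => g (U^[j] z)) _ fun j _ =>
      (hU.iterate j).integrable_comp_of_integrable hg]
    simp only [hiter, Finset.sum_const, Finset.card_range, Nat.cast_smul_eq_nsmul]
  unfold birkhoffAverage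
  rw [integral_smul, hsum]
  exact inv_smul_smul₀ (Nat.cast_ne_zero.2 hn) _

/- Almost every orbit enters `B`, where the averages over the times `p * n` are at least `L`, and a
finite delay does not affect the limit of bounded averages. -/
lemma le_integral_of_forall_le_birkhoffAverage [IsProbabilityMeasure μ]
    (hU : MeasurePreserving U μ μ) {g : Z → ℝ} (hg : Integrable g μ)
    (hgb : Bornology.IsBounded (Set.range g)) {p : ℕ} (hp : p ≠ 0) {B : Set Z}
    (hB : Set.MapsTo U^[p] B B) {L : ℝ} (hL : ∀ z ∈ B, L ≤ birkhoffAverage ℝ U g p z)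
    (hentry : ∀ᵐ z ∂μ, ∃ m, U^[m] z ∈ B) : L ≤ ∫ z, g z ∂μ := by
  let A (n : ℕ) (z : Z) : ℝ := birkhoffAverage ℝ U g (p * n) z
  have hA_int (n : ℕ) : Integrable (A n) μ := integrable_birkhoffAverage hU hg _
  obtain ⟨M, hM⟩ := hgb.exists_norm_le
  have hA_norm (n : ℕ) (z : Z) : ‖A n z‖ ≤ M :=
    norm_birkhoffAverage_le (fun z => hM _ ⟨z, rfl⟩) _ z
  have hA_lim : ∀ᵐ z ∂μ, Tendsto (fun n => min (A n z) L) atTop (𝓝 L) := by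
    filter_upwards [hentry] with z ⟨m, hm⟩
    have hdelay : Tendsto (fun n => A n (U^[m] z) - A n z) atTop (𝓝 0) :=
      (tendsto_birkhoffAverage_iterate_sub_birkhoffAverage hgb m z).comp
        (tendsto_id.const_mul_atTop' hp.bot_lt)
    have hlower : Tendsto (fun n => min (L - (A n (U^[m] z) - A n z)) L) atTop (𝓝 L) := by
      simpa only [sub_zero, min_self] using (hdelay.const_sub L).min (tendsto_const_nhds (x := L))
    refine tendsto_of_tendsto_of_tendsto_of_le_of_le' hlower tendsto_const_nhds ?_
      (.of_forall fun n => min_le_right _ _)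
    filter_upwards [eventually_ne_atTop 0] with n hn
    have hL_le : L ≤ A n (U^[m] z) := by
      simp only [A, birkhoffAverage_mul]
      exact le_birkhoffAverage_of_mapsTo hB hL hn hm
    exact min_le_min_right L (by linarith)
  have hint_lim : Tendsto (fun n => ∫ z, min (A n z) L ∂μ) atTop (𝓝 L) := by
    simpa using tendsto_integral_of_dominated_convergence (fun _ => max M ‖L‖)
      (fun n => ((hA_int n).inf (integrable_const L)).aestronglyMeasurable)
      (integrable_const _)
      (fun n => ae_of_all _ fun z =>
        abs_min_le_max_abs_abs.trans (max_le_max_right _ (hA_norm n z))) hA_lim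
  refine le_of_tendsto hint_lim ?_
  filter_upwards [eventually_ne_atTop 0] with n hn
  calc ∫ z, min (A n z) L ∂μ ≤ ∫ z, A n z ∂μ :=
        integral_mono ((hA_int n).inf (integrable_const L)) (hA_int n) fun z => min_le_left _ _
    _ = ∫ z, g z ∂μ := integral_birkhoffAverage hU hg (mul_ne_zero hp hn)

end InvariantMeasure

section OrbitAverage

variable {Z W : Type*} [MeasurableSpace Z] [MeasurableSpace W]

/-- The average `(1/n) Σ_{j<n} (U^j)_* μ` of the push-forwards of a measure along the iterates of a
map. For `μ = δ_z` it is the empirical measure of the first `n` points of the orbit of `z`, hence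
an invariant measure when `z` has period `n`. -/
def orbitAverage (U : Z → Z) (n : ℕ) (μ : Measure Z) : Measure Z :=
  (n : ℝ≥0∞)⁻¹ • ∑ j ∈ Finset.range n, μ.map U^[j]

lemma isProbabilityMeasure_orbitAverage {U : Z → Z} (hU : Measurable U) {n : ℕ} (hn : n ≠ 0)
    (μ : Measure Z) [IsProbabilityMeasure μ] : IsProbabilityMeasure (orbitAverage U n μ) := by
  have hmass (j : ℕ) : (μ.map U^[j]) Set.univ = 1 := by
    rw [Measure.map_apply (hU.iterate j) MeasurableSet.univ, Set.preimage_univ, measure_univ]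
  constructor
  simp only [orbitAverage, Measure.smul_apply, Measure.finsetSum_apply, hmass, Finset.sum_const,
    Finset.card_range, nsmul_eq_mul, mul_one, smul_eq_mul]
  exact ENNReal.inv_mul_cancel (Nat.cast_ne_zero.2 hn) (ENNReal.natCast_ne_top n)

lemma map_orbitAverage {U : Z → Z} {V : W → W} {π : Z → W} (hU : Measurable U) (hV : Measurable V)
    (hπ : Measurable π) (h : Function.Semiconj π U V) (n : ℕ) (μ : Measure Z) :
    (orbitAverage U n μ).map π = orbitAverage V n (μ.map π) := by
  have hiter (j : ℕ) : (μ.map U^[j]).map π = (μ.map π).map V^[j] := by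
    rw [Measure.map_map hπ (hU.iterate j), Measure.map_map (hV.iterate j) hπ,
      (h.iterate_right j).comp_eq]
  rw [orbitAverage, orbitAverage, Measure.map_smul, ← Measure.mapₗ_apply_of_measurable hπ, map_sum]
  simp only [Measure.mapₗ_apply_of_measurable hπ, hiter]

lemma orbitAverage_map_self {U : Z → Z} (hU : Measurable U) {n : ℕ} {μ : Measure Z}
    (h : μ.map U^[n] = μ) : orbitAverage U n (μ.map U) = orbitAverage U n μ := by
  have hshift (j : ℕ) : (μ.map U).map U^[j] = μ.map U^[j + 1] := by
    rw [Measure.map_map (hU.iterate j) hU, Function.iterate_succ]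
  simp only [orbitAverage, hshift]
  congr 1
  cases n with
  | zero => rfl
  | succ n => rw [Finset.sum_range_succ, h, Finset.sum_range_succ', Function.iterate_zero,
      Measure.map_id]

lemma map_orbitAverage_self {U : Z → Z} (hU : Measurable U) {n : ℕ} {μ : Measure Z}
    (h : μ.map U^[n] = μ) : (orbitAverage U n μ).map U = orbitAverage U n μ := by
  rw [map_orbitAverage hU hU hU (Function.Commute.refl U), orbitAverage_map_self hU h]

lemma map_orbitAverage_dirac_self {U : Z → Z} (hU : Measurable U) {p : ℕ} {z : Z}
    (hz : Function.IsPeriodicPt U p z) :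
    (orbitAverage U p (Measure.dirac z)).map U = orbitAverage U p (Measure.dirac z) :=
  map_orbitAverage_self hU (by rw [Measure.map_dirac' (hU.iterate p), hz])

lemma ae_orbitAverage_dirac [MeasurableSingletonClass Z] {U : Z → Z} (hU : Measurable U) {p : ℕ}
    {z : Z} (hz : Function.IsPeriodicPt U p z) :
    ∀ᵐ w ∂orbitAverage U p (Measure.dirac z), ∃ m, U^[m] w = z := by
  refine Measure.ae_smul_measure (ae_finsetSum_measure_iff.2 fun j hj => ?_) _
  rw [Measure.map_dirac' (hU.iterate j), ae_dirac_eq, eventually_pure]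
  refine ⟨p - j, ?_⟩
  rw [← Function.iterate_add_apply, Nat.sub_add_cancel (Finset.mem_range.1 hj).le, hz]

lemma integral_orbitAverage_dirac {E : Type*} [NormedAddCommGroup E] [NormedSpace ℝ E]
    [CompleteSpace E] {U : Z → Z} (hU : Measurable U) {g : Z → E} (hg : StronglyMeasurable g)
    (n : ℕ) (z : Z) :
    ∫ w, g w ∂orbitAverage U n (Measure.dirac z) = birkhoffAverage ℝ U g n z := by
  simp only [orbitAverage, Measure.map_dirac' (hU.iterate _)]
  rw [integral_smul_measure,
    integral_finsetSum_measure fun j _ => integrable_dirac' hg enorm_lt_top]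
  simp only [integral_dirac' _ _ hg, ENNReal.toReal_inv, ENNReal.toReal_natCast]
  rfl

end OrbitAverage

section Lift

variable {X Y : Type*} [TopologicalSpace X] [CompactSpace X] [T2Space X] [HasOuterApproxClosed X]
  [Nonempty X] [MeasurableSpace X] [BorelSpace X] [MeasurableSpace Y]

/-- The **Krylov–Bogolyubov theorem**: a limit of empirical measures along an orbit is invariant. -/
theorem nonempty_invMeas {U : X → X} (hU : Continuous U) : (invMeas U).Nonempty := by
  obtain ⟨z⟩ := ‹Nonempty X›
  let m (n : ℕ) : ProbabilityMeasure X :=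
    ⟨orbitAverage U (n + 1) (Measure.dirac z),
      isProbabilityMeasure_orbitAverage hU.measurable n.succ_ne_zero _⟩
  let μ : ProbabilityMeasure X := ((hyperfilter ℕ).map m).lim
  have hm : Tendsto m (hyperfilter ℕ) (𝓝 μ) := ((hyperfilter ℕ).map m).le_nhds_lim
  have hm_integral := ProbabilityMeasure.tendsto_iff_forall_integral_tendsto.1 hm
  refine ⟨μ, ?_⟩
  have := Measure.isProbabilityMeasure_map (μ := μ.toMeasure) hU.measurable.aemeasurable
  refine ext_of_forall_integral_eq_of_IsFiniteMeasure fun g => ?_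
  rw [integral_map hU.measurable.aemeasurable g.continuous.aestronglyMeasurable]
  have hm_map (n : ℕ) :
      ∫ x, g (U x) ∂(m n).toMeasure = birkhoffAverage ℝ U g (n + 1) (U z) := by
    rw [← integral_map hU.measurable.aemeasurable g.continuous.aestronglyMeasurable,
      ProbabilityMeasure.coe_mk,
      map_orbitAverage hU.measurable hU.measurable hU.measurable (Function.Commute.refl U),
      Measure.map_dirac' hU.measurable,
      integral_orbitAverage_dirac hU.measurable g.continuous.stronglyMeasurable]
  have hm_dirac (n : ℕ) : ∫ x, g x ∂(m n).toMeasure = birkhoffAverage ℝ U g (n + 1) z :=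
    integral_orbitAverage_dirac hU.measurable g.continuous.stronglyMeasurable _ _
  have hlim := (hm_integral (g.compContinuous ⟨U, hU⟩)).sub (hm_integral g)
  have hlim_zero := ((tendsto_birkhoffAverage_apply_sub_birkhoffAverage' ℝ g.isBounded_range U
    z).comp (tendsto_add_atTop_nat 1)).mono_left Nat.hyperfilter_le_atTop
  refine sub_eq_zero.1 (tendsto_nhds_unique hlim (hlim_zero.congr fun n => ?_))
  exact congrArg₂ (· - ·) (hm_map n).symm (hm_dirac n).symm

lemma exists_mem_invMeas_map_snd_eq_orbitAverage_dirac {T : X → X} {S : Y → Y} (hT : Continuous T)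
    (hS : Measurable S) {p : ℕ} (hp : p ≠ 0) {y : Y} (hy : Function.IsPeriodicPt S p y) :
    ∃ lam ∈ invMeas (Prod.map T S),
      lam.toMeasure.map Prod.snd = orbitAverage S p (Measure.dirac y) := by
  obtain ⟨μ, hμ⟩ := nonempty_invMeas (hT.iterate p)
  have hTS : Measurable (Prod.map T S) := hT.measurable.prodMap hS
  have hperiodic : (μ.toMeasure.prod (Measure.dirac y)).map (Prod.map T S)^[p] =
      μ.toMeasure.prod (Measure.dirac y) := by
    rw [Prod.map_iterate, ← Measure.map_prod_map _ _ (hT.measurable.iterate p) (hS.iterate p),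
      hμ, Measure.map_dirac' (hS.iterate p), hy]
  refine ⟨⟨orbitAverage (Prod.map T S) p (μ.toMeasure.prod (Measure.dirac y)),
    isProbabilityMeasure_orbitAverage hTS hp _⟩, map_orbitAverage_self hTS hperiodic, ?_⟩
  rw [ProbabilityMeasure.coe_mk, map_orbitAverage hTS hS measurable_snd (fun _ => rfl),
    Measure.map_snd_prod, measure_univ, one_smul]

end Lift

section Alpha

variable {X Y : Type*} {T : X → X} {S : Y → Y} {f : X × Y → ℝ} {M : ℝ}

lemma abs_birk2_le (hfM : ∀ z, ‖f z‖ ≤ M) (k : ℕ) (x : X) (y : Y) : |birk2 T S f k x y| ≤ M :=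
  norm_birkhoffAverage_le hfM k (x, y)

lemma neg_le_iSup_iInf_birk2 [Nonempty X] [Nonempty Y] (hfM : ∀ z, ‖f z‖ ≤ M) (k : ℕ) :
    -M ≤ ⨆ y, ⨅ x, birk2 T S f k x y := by
  have hlower (x : X) (y : Y) : -M ≤ birk2 T S f k x y := (abs_le.1 (abs_birk2_le hfM k x y)).1
  obtain ⟨x₀⟩ := ‹Nonempty X›
  obtain ⟨y₀⟩ := ‹Nonempty Y›
  have hbdd : BddAbove (Set.range fun y => ⨅ x, birk2 T S f k x y) := by
    refine ⟨M, Set.forall_mem_range.2 fun y => ?_⟩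
    exact ciInf_le_of_le ⟨-M, Set.forall_mem_range.2 fun x => hlower x y⟩ x₀
      (abs_le.1 (abs_birk2_le hfM k x₀ y)).2
  have : Nonempty X := ⟨x₀⟩
  exact le_ciSup_of_le hbdd y₀ (le_ciInf fun x => hlower x y₀)

variable [MeasurableSpace X] [MeasurableSpace Y]

lemma psi2_le (hM : 0 ≤ M) (hfM : ∀ z, ‖f z‖ ≤ M) (ν : ProbabilityMeasure Y) :
    psi2 T S f ν ≤ M := by
  have hint (lam : ProbabilityMeasure (X × Y)) : |∫ z, f z ∂lam.toMeasure| ≤ M := by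
    simpa using norm_integral_le_of_norm_le_const (μ := lam.toMeasure) (ae_of_all _ hfM)
  rw [psi2]
  rcases Set.eq_empty_or_nonempty {r | ∃ lam ∈ invMeas (Prod.map T S),
    lam.toMeasure.map Prod.snd = ν.toMeasure ∧ r = ∫ z, f z ∂lam.toMeasure} with h | h
  · -- `ν` has no lift, and `sInf ∅ = 0`
    simpa [h] using hM
  · obtain ⟨_, lam, hlam, hsnd, rfl⟩ := h
    refine csInf_le_of_le ⟨-M, ?_⟩ ⟨lam, hlam, hsnd, rfl⟩ (abs_le.1 (hint lam)).2
    rintro _ ⟨κ, -, -, rfl⟩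
    exact (abs_le.1 (hint κ)).1

lemma le_integral_of_map_snd_eq_orbitAverage_dirac [MeasurableSingletonClass Y]
    (hT : Measurable T) (hS : Measurable S) (hf : Measurable f) (hfM : ∀ z, ‖f z‖ ≤ M) {p : ℕ}
    (hp : p ≠ 0) {y : Y} (hy : Function.IsPeriodicPt S p y) {L : ℝ}
    (hL : ∀ x, L ≤ birk2 T S f p x y) {lam : ProbabilityMeasure (X × Y)}
    (hlam : lam ∈ invMeas (Prod.map T S))
    (hsnd : lam.toMeasure.map Prod.snd = orbitAverage S p (Measure.dirac y)) :
    L ≤ ∫ z, f z ∂lam.toMeasure := by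
  have hentry : ∀ᵐ z ∂lam.toMeasure, ∃ m, (Prod.map T S)^[m] z ∈ Prod.snd ⁻¹' {y} := by
    have h := ae_orbitAverage_dirac hS hy
    rw [← hsnd] at h
    simpa [Prod.map_iterate] using ae_of_ae_map measurable_snd.aemeasurable h
  refine le_integral_of_forall_le_birkhoffAverage (p := p) (B := Prod.snd ⁻¹' {y})
    ⟨hT.prodMap hS, hlam⟩ (.of_bound hf.aestronglyMeasurable M (ae_of_all _ hfM))
    (isBounded_iff_forall_norm_le.2 ⟨M, Set.forall_mem_range.2 hfM⟩) hp ?_ ?_ hentry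
  · rintro ⟨x, _⟩ rfl
    simpa [Prod.map_iterate] using hy.eq
  · rintro ⟨x, _⟩ rfl
    exact hL x

lemma le_alpha2_of_isPeriodicPt [TopologicalSpace X] [CompactSpace X] [T2Space X]
    [HasOuterApproxClosed X] [Nonempty X] [BorelSpace X] [MeasurableSingletonClass Y]
    (hT : Continuous T) (hS : Measurable S) (hf : Measurable f) (hfM : ∀ z, ‖f z‖ ≤ M) {p : ℕ}
    (hp : p ≠ 0) {y : Y} (hy : Function.IsPeriodicPt S p y) {L : ℝ}
    (hL : ∀ x, L ≤ birk2 T S f p x y) : L ≤ alpha2 T S f := by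
  let ν : ProbabilityMeasure Y :=
    ⟨orbitAverage S p (Measure.dirac y), isProbabilityMeasure_orbitAverage hS hp _⟩
  have hν : ν ∈ invMeas S := map_orbitAverage_dirac_self hS hy
  have hM : 0 ≤ M := (norm_nonneg _).trans (hfM (Classical.arbitrary X, y))
  have hbdd : BddAbove {r | ∃ ν ∈ invMeas S, r = psi2 T S f ν} :=
    ⟨M, by rintro _ ⟨κ, -, rfl⟩; exact psi2_le hM hfM κ⟩
  refine le_csSup_of_le hbdd ⟨ν, hν, rfl⟩ ?_
  obtain ⟨lam, hlam, hsnd⟩ := exists_mem_invMeas_map_snd_eq_orbitAverage_dirac hT hS hp hy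
  refine le_csInf ⟨_, lam, hlam, hsnd, rfl⟩ ?_
  rintro _ ⟨κ, hκ, hκ_snd, rfl⟩
  exact le_integral_of_map_snd_eq_orbitAverage_dirac hT.measurable hS hf hfM hp hy hL hκ hκ_snd

end Alpha

section Closing

/-- Periodic closing with sublinear gaps: every orbit segment of length `k` is `η`-shadowed by a
periodic orbit whose period exceeds `k` by at most a proportion `c`, which may be prescribed
arbitrarily small once `k` is large. Under periodic specification the excess is
bounded independently of `k`. -/
def HasPeriodicClosing {Y : Type*} [PseudoMetricSpace Y] (S : Y → Y) : Prop :=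
  ∀ η > 0, ∀ c > 0, ∀ᶠ k : ℕ in atTop, ∀ y, ∃ (p : ℕ) (w : Y), k ≤ p ∧ (p : ℝ) ≤ (1 + c) * k ∧
    Function.IsPeriodicPt S p w ∧ ∀ j < k, dist (S^[j] w) (S^[j] y) < η

lemma zit_natCast {X : Type*} [TopologicalSpace X] (T : X ≃ₜ X) (j : ℕ) (x : X) :
    zit T j x = T^[j] x := by
  rw [zit, zpow_natCast, ← Equiv.Perm.iterate_eq_pow]
  rfl

lemma PerSpecProp.hasPeriodicClosing {Y : Type*} [MetricSpace Y] {S : Y ≃ₜ Y}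
    (h : PerSpecProp S) : HasPeriodicClosing S := by
  intro η hη c hc
  obtain ⟨D, hD, hspec⟩ := h η hη
  filter_upwards [eventually_ge_atTop 1, eventually_ge_atTop ⌈D / c⌉₊] with k hk hkD y
  obtain ⟨w, hclose, hper⟩ := hspec 0 (fun _ => y) (fun _ => 0) (fun _ => ((k - 1 : ℕ) : ℤ))
    (fun _ => Int.natCast_nonneg _) (fun i => i.elim0)
  have hgap : (D : ℝ) ≤ c * k := (div_le_iff₀' hc).1 (Nat.ceil_le.1 hkD)
  refine ⟨k - 1 + D, w, by lia, ?_, ?_, fun j hj => ?_⟩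
  · push_cast [hk]
    linarith
  · rwa [sub_zero, ← Nat.cast_add, zit_natCast] at hper
  · simpa only [zit_natCast] using hclose 0 j (Int.natCast_nonneg _) (by lia)

lemma exists_forall_dist_lt_of_dist_snd_lt {X Y : Type*} [TopologicalSpace X] [CompactSpace X]
    [PseudoMetricSpace Y] [CompactSpace Y] {f : X × Y → ℝ} (hf : Continuous f) {ε : ℝ}
    (hε : 0 < ε) : ∃ η > 0, ∀ y w, dist y w < η → ∀ x, dist (f (x, y)) (f (x, w)) < ε := by
  let F : C(Y, C(X, ℝ)) := ContinuousMap.curry ⟨fun q => f (q.2, q.1), hf.comp continuous_swap⟩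
  obtain ⟨η, hη, hF⟩ := Metric.uniformContinuous_iff.1
    (CompactSpace.uniformContinuous_of_continuous F.continuous) ε hε
  exact ⟨η, hη, fun y w hyw x => (ContinuousMap.dist_apply_le_dist (f := F y) (g := F w) x).trans_lt
    (hF hyw)⟩

variable {X Y : Type*} [TopologicalSpace X] [CompactSpace X] [T2Space X] [HasOuterApproxClosed X]
  [Nonempty X] [MeasurableSpace X] [BorelSpace X] [MetricSpace Y] [CompactSpace Y]
  [MeasurableSpace Y] [OpensMeasurableSpace Y] {T : X → X} {S : Y → Y} {f : X × Y → ℝ}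

lemma eventually_forall_iInf_birk2_le_alpha2_add (hT : Continuous T) (hS : Measurable S)
    (hf : Continuous f) (hclose : HasPeriodicClosing S) {ε : ℝ} (hε : 0 < ε) :
    ∀ᶠ k in atTop, ∀ y, ⨅ x, birk2 T S f k x y ≤ alpha2 T S f + ε := by
  obtain ⟨M, hM, hfM⟩ := (isCompact_range hf).isBounded.exists_pos_norm_le
  rw [Set.forall_mem_range] at hfM
  obtain ⟨η, hη, hfη⟩ := exists_forall_dist_lt_of_dist_snd_lt hf (half_pos hε)
  filter_upwards [hclose η hη (ε / (4 * M)) (by positivity), eventually_ne_atTop 0] with k hk hk0 y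
  obtain ⟨p, w, hkp, hpk, hw, hshadow⟩ := hk y
  rw [← sub_le_iff_le_add]
  refine le_alpha2_of_isPeriodicPt hT hS hf.measurable hfM (by lia) hw fun x => ?_
  have hbdd : BddBelow (Set.range fun x => birk2 T S f k x y) :=
    ⟨-M, Set.forall_mem_range.2 fun x => (abs_le.1 (abs_birk2_le hfM k x y)).1⟩
  have hdist : dist (birk2 T S f k x y) (birk2 T S f p x w) ≤ ε / 2 + 2 * M * (ε / (4 * M)) := by
    refine dist_birkhoffAverage_le_of_shadow hfM (half_pos hε).le (by positivity) hkp hpk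
      fun j hj => ?_
    simpa only [Prod.map_iterate, Prod.map_apply] using
      (hfη _ _ (dist_comm (S^[j] w) _ ▸ hshadow j hj) (T^[j] x)).le
  have hε_split : ε / 2 + 2 * M * (ε / (4 * M)) = ε := by field_simp; ring
  rw [hε_split, Real.dist_eq] at hdist
  linarith [ciInf_le hbdd x, (abs_le.1 hdist).2]

theorem stmt13_general [Nonempty Y] (hT : Continuous T) (hS : Measurable S) (hf : Continuous f)
    (hclose : HasPeriodicClosing S) : delta2 T S f ≤ alpha2 T S f := by
  obtain ⟨M, hfM⟩ := (isCompact_range hf).isBounded.exists_norm_le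
  rw [Set.forall_mem_range] at hfM
  refine le_of_forall_pos_le_add fun ε hε => limsup_le_of_le ?_ ?_
  · exact isCoboundedUnder_le_of_le _ (neg_le_iSup_iInf_birk2 hfM)
  · filter_upwards [eventually_forall_iInf_birk2_le_alpha2_add hT hS hf hclose hε] with k hk
    exact ciSup_le hk

end Closing

/-- if `(Y, S)` has the periodic specification property, then
`α(f) ≥ δ(f)`. -/
theorem stmt13
    {X Y : Type*}
    [MetricSpace X] [CompactSpace X] [Nonempty X] [MeasurableSpace X] [BorelSpace X]
    [MetricSpace Y] [CompactSpace Y] [Nonempty Y] [MeasurableSpace Y] [BorelSpace Y]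
    (T : X ≃ₜ X) (S : Y ≃ₜ Y) (f : X × Y → ℝ) (hf : Continuous f)
    (hspecY : PerSpecProp S) :
    delta2 (⇑T) (⇑S) f ≤ alpha2 (⇑T) (⇑S) f := by
  exact stmt13_general T.continuous S.continuous.measurable hf hspecY.hasPeriodicClosing
end
end
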